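/- Let (C, ψ_C) be a Coder pair and (M, ρ_l, ρ_r, ψ_M) a bicomodule of (C, ψ_C). Then the maps d_c^n of the Coder-pair cochain complex satisfy d_c^{n+1} ∘ d_c^n = 0 for all n ≥ 1; i.e. for every f ∈ C_c^n(M,C) and g ∈ C_c^{n−1}(M,C), one has δ_c(δ_c(f)) = 0 and δ_c(δ_c(g) + (−1)^n ω(f)) + (−1)^{n+1} ω(δ_c(f)) = 0. -/

import Mathlib

open TensorProduct LinearMap

variable (k : Type) [Field k]

/-- Iterated tensor power: `Tpow k C n = C^{⊗(n+1)}`, right-nested. -/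
noncomputable def Tpow (C : ModuleCat.{0} k) : ℕ → ModuleCat.{0} k
  | 0 => C
  | n + 1 => ModuleCat.of k (C ⊗[k] Tpow C n)

/-- `Id^{⊗ i} ⊗ Δ ⊗ Id^{⊗ (n - i)} : C^{⊗(n+1)} → C^{⊗(n+2)}`, applying `Δ` to the
`i`-th tensor factor (0-based). -/
noncomputable def insDelta (C : ModuleCat.{0} k) (Δ : C →ₗ[k] C ⊗[k] C) :
    (n : ℕ) → Fin (n + 1) → (Tpow k C n →ₗ[k] Tpow k C (n + 1))
  | 0, _ => Δ
  | n + 1, i =>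
    i.cases
      ((TensorProduct.assoc k C C (Tpow k C n)).toLinearMap ∘ₗ
        LinearMap.rTensor (Tpow k C n) Δ)
      (fun j => LinearMap.lTensor C (insDelta C Δ n j))

/-- `Id^{⊗ i} ⊗ ψ ⊗ Id^{⊗ (n - i)} : C^{⊗(n+1)} → C^{⊗(n+1)}`, applying `ψ` to the
`i`-th tensor factor (0-based). -/
noncomputable def psiAt (C : ModuleCat.{0} k) (ψ : C →ₗ[k] C) :
    (n : ℕ) → Fin (n + 1) → (Tpow k C n →ₗ[k] Tpow k C n)
  | 0, _ => ψ
  | n + 1, i =>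
    i.cases (LinearMap.rTensor (Tpow k C n) ψ)
      (fun j => LinearMap.lTensor C (psiAt C ψ n j))

/-- The canonical identification `C^{⊗(n+1)} ⊗ C ≅ C^{⊗(n+2)}`. -/
noncomputable def rshift (C : ModuleCat.{0} k) :
    (n : ℕ) → ((Tpow k C n) ⊗[k] C →ₗ[k] Tpow k C (n + 1))
  | 0 => LinearMap.id
  | n + 1 => LinearMap.lTensor C (rshift C n) ∘ₗ
      (TensorProduct.assoc k C (Tpow k C n) C).toLinearMap

variable {k}

/-- The Hochschild coalgebra coboundary
`δ_c(f) = (Id_C ⊗ f) ∘ ρ_l + Σ_{i=1}^{n} (−1)^i (Id^{⊗(i−1)} ⊗ Δ ⊗ Id^{⊗(n−i)}) ∘ f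
          + (−1)^{n+1} (f ⊗ Id_C) ∘ ρ_r`
for `f ∈ C_c^{n+1}(M, C) = Hom(M, C^{⊗(n+1)})`. -/
noncomputable def deltaC (C : ModuleCat.{0} k) (Δ : C →ₗ[k] C ⊗[k] C)
    (M : ModuleCat.{0} k) (ρl : M →ₗ[k] C ⊗[k] M) (ρr : M →ₗ[k] M ⊗[k] C)
    (n : ℕ) (f : M →ₗ[k] Tpow k C n) : M →ₗ[k] Tpow k C (n + 1) :=
  (show (M : Type) →ₗ[k] Tpow k C (n + 1) from LinearMap.lTensor C f ∘ₗ ρl)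
    + ∑ j : Fin (n + 1), ((-1 : ℤ) ^ (j.val + 1)) • (insDelta k C Δ n j ∘ₗ f)
    + ((-1 : ℤ) ^ (n + 2)) • (rshift k C n ∘ₗ LinearMap.rTensor C f ∘ₗ ρr)

/-- The operator `ω(f) = Σ_{i=1}^{n} (Id^{⊗(i−1)} ⊗ ψ_C ⊗ Id^{⊗(n−i)}) ∘ f − f ∘ ψ_M`
for `f ∈ C_c^{n+1}(M, C) = Hom(M, C^{⊗(n+1)})`. -/
noncomputable def omegaC (C : ModuleCat.{0} k) (ψC : C →ₗ[k] C)
    (M : ModuleCat.{0} k) (ψM : M →ₗ[k] M)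
    (n : ℕ) (f : M →ₗ[k] Tpow k C n) : M →ₗ[k] Tpow k C n :=
  (∑ j : Fin (n + 1), psiAt k C ψC n j ∘ₗ f) - f ∘ₗ ψM

namespace CoderPair

section Plain

variable {C X Y M : Type} [AddCommGroup C] [Module k C] [AddCommGroup X] [Module k X]
  [AddCommGroup Y] [Module k Y] [AddCommGroup M] [Module k M]

/-- Comultiplication on the first factor of `C ⊗ X`. -/
noncomputable def headDelta (Δ : C →ₗ[k] C ⊗[k] C) (X : Type) [AddCommGroup X] [Module k X] :
    C ⊗[k] X →ₗ[k] C ⊗[k] (C ⊗[k] X) :=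
  (TensorProduct.assoc k C C X).toLinearMap ∘ₗ LinearMap.rTensor X Δ

/-- Extends the alternating sum of comultiplications by one tensor factor on the left. -/
noncomputable def deltaStep (Δ : C →ₗ[k] C ⊗[k] C) (D : X →ₗ[k] C ⊗[k] X) :
    C ⊗[k] X →ₗ[k] C ⊗[k] (C ⊗[k] X) :=
  headDelta Δ X - LinearMap.lTensor C D

/-- Extends a shift `X ⊗ C → C ⊗ X` by one tensor factor on the left. -/
noncomputable def shiftStep (r : X ⊗[k] C →ₗ[k] C ⊗[k] X) :
    (C ⊗[k] X) ⊗[k] C →ₗ[k] C ⊗[k] (C ⊗[k] X) :=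
  LinearMap.lTensor C r ∘ₗ (TensorProduct.assoc k C X C).toLinearMap

/-- The sum of `ψ` on the first factor and `P` on the remaining ones. -/
noncomputable def psiStep (ψ : C →ₗ[k] C) (P : X →ₗ[k] X) : C ⊗[k] X →ₗ[k] C ⊗[k] X :=
  LinearMap.rTensor X ψ + LinearMap.lTensor C P

/-- The coboundary built from an arbitrary inner differential, shift and sign. -/
noncomputable def coboundary (ρl : M →ₗ[k] C ⊗[k] M) (ρr : M →ₗ[k] M ⊗[k] C)
    (D : X →ₗ[k] C ⊗[k] X) (r : X ⊗[k] C →ₗ[k] C ⊗[k] X) (s : ℤ) (f : M →ₗ[k] X) :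
    M →ₗ[k] C ⊗[k] X :=
  LinearMap.lTensor C f ∘ₗ ρl - D ∘ₗ f + s • (r ∘ₗ LinearMap.rTensor C f ∘ₗ ρr)

theorem headDelta_comp_lTensor (Δ : C →ₗ[k] C ⊗[k] C) (g : X →ₗ[k] Y) :
    headDelta Δ Y ∘ₗ LinearMap.lTensor C g
      = LinearMap.lTensor C (LinearMap.lTensor C g) ∘ₗ headDelta Δ X := by
  ext c x
  simp only [headDelta, AlgebraTensorModule.curry_apply, curry_apply, restrictScalars_self,
    coe_comp, Function.comp_apply, lTensor_tmul, rTensor_tmul, LinearEquiv.coe_coe]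
  induction Δ c with
  | zero => simp
  | tmul a b => simp
  | add a b ha hb => simp only [add_tmul, map_add, ha, hb]

theorem headDelta_comp_headDelta {Δ : C →ₗ[k] C ⊗[k] C}
    (hΔ : (TensorProduct.assoc k C C C).toLinearMap ∘ₗ LinearMap.rTensor C Δ ∘ₗ Δ
      = LinearMap.lTensor C Δ ∘ₗ Δ) :
    headDelta Δ (C ⊗[k] X) ∘ₗ headDelta Δ X
      = LinearMap.lTensor C (headDelta Δ X) ∘ₗ headDelta Δ X := by
  ext c x
  have key (t : C ⊗[k] C) :
      headDelta Δ (C ⊗[k] X) (TensorProduct.assoc k C C X (t ⊗ₜ x))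
        = LinearMap.lTensor C (TensorProduct.assoc k C C X).toLinearMap
            (TensorProduct.assoc k C (C ⊗[k] C) X
              (TensorProduct.assoc k C C C (LinearMap.rTensor C Δ t) ⊗ₜ x)) := by
    induction t with
    | zero => simp
    | add a b ha hb => simp only [add_tmul, map_add, ha, hb]
    | tmul a b =>
      simp only [headDelta, coe_comp, Function.comp_apply, rTensor_tmul, LinearEquiv.coe_coe,
        TensorProduct.assoc_tmul]
      induction Δ a with
      | zero => simp
      | tmul a b => simp
      | add a b ha hb => simp only [add_tmul, map_add, ha, hb]
  have key' (t : C ⊗[k] C) :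
      LinearMap.lTensor C (headDelta Δ X) (TensorProduct.assoc k C C X (t ⊗ₜ x))
        = LinearMap.lTensor C (TensorProduct.assoc k C C X).toLinearMap
            (TensorProduct.assoc k C (C ⊗[k] C) X (LinearMap.lTensor C Δ t ⊗ₜ x)) := by
    induction t with
    | zero => simp
    | add a b ha hb => simp only [add_tmul, map_add, ha, hb]
    | tmul a b => simp [headDelta]
  have h := LinearMap.congr_fun hΔ c
  simp only [coe_comp, Function.comp_apply, LinearEquiv.coe_coe] at h
  calc _ = headDelta Δ (C ⊗[k] X) (TensorProduct.assoc k C C X (Δ c ⊗ₜ x)) := rfl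
    _ = LinearMap.lTensor C (headDelta Δ X) (TensorProduct.assoc k C C X (Δ c ⊗ₜ x)) := by
      rw [key, key', h]
    _ = _ := rfl

theorem deltaStep_comp_deltaStep {Δ : C →ₗ[k] C ⊗[k] C}
    (hΔ : (TensorProduct.assoc k C C C).toLinearMap ∘ₗ LinearMap.rTensor C Δ ∘ₗ Δ
      = LinearMap.lTensor C Δ ∘ₗ Δ)
    {D : X →ₗ[k] C ⊗[k] X} (hD : deltaStep Δ D ∘ₗ D = 0) :
    deltaStep Δ (deltaStep Δ D) ∘ₗ deltaStep Δ D = 0 := by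
  have h1 := headDelta_comp_headDelta (X := X) hΔ
  have h2 := headDelta_comp_lTensor Δ D
  have h3 : LinearMap.lTensor C (deltaStep Δ D) ∘ₗ LinearMap.lTensor C D = 0 := by
    rw [← LinearMap.lTensor_comp, hD, LinearMap.lTensor_zero]
  have h4 : LinearMap.lTensor C (deltaStep Δ D)
      = LinearMap.lTensor C (headDelta Δ X) - LinearMap.lTensor C (LinearMap.lTensor C D) :=
    LinearMap.lTensor_sub ..
  calc deltaStep Δ (deltaStep Δ D) ∘ₗ deltaStep Δ D
      = (headDelta Δ (C ⊗[k] X) - LinearMap.lTensor C (deltaStep Δ D)) ∘ₗ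
          (headDelta Δ X - LinearMap.lTensor C D) := rfl
    _ = 0 := by
      rw [LinearMap.sub_comp, LinearMap.comp_sub, LinearMap.comp_sub, h1, h2, h3, h4,
        LinearMap.sub_comp]
      abel

theorem deltaStep_comp_self {Δ : C →ₗ[k] C ⊗[k] C}
    (hΔ : (TensorProduct.assoc k C C C).toLinearMap ∘ₗ LinearMap.rTensor C Δ ∘ₗ Δ
      = LinearMap.lTensor C Δ ∘ₗ Δ) :
    deltaStep Δ Δ ∘ₗ Δ = 0 := by
  rw [deltaStep, LinearMap.sub_comp, headDelta, LinearMap.comp_assoc, hΔ, sub_self]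

theorem deltaStep_comp_id (Δ : C →ₗ[k] C ⊗[k] C) :
    deltaStep Δ Δ ∘ₗ LinearMap.id
      = shiftStep LinearMap.id ∘ₗ LinearMap.rTensor C Δ
        - (1 : ℤ) • (shiftStep LinearMap.id ∘ₗ LinearMap.rTensor C LinearMap.id ∘ₗ
          (TensorProduct.assoc k C C C).symm.toLinearMap ∘ₗ LinearMap.lTensor C Δ) := by
  ext x y
  simp [deltaStep, shiftStep, headDelta]

theorem shiftStep_comp_headDelta (Δ : C →ₗ[k] C ⊗[k] C) (r : X ⊗[k] C →ₗ[k] C ⊗[k] X) :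
    shiftStep (shiftStep r) ∘ₗ LinearMap.rTensor C (headDelta Δ X)
      = headDelta Δ (C ⊗[k] X) ∘ₗ shiftStep r := by
  ext c x y
  simp only [headDelta, shiftStep, AlgebraTensorModule.curry_apply, curry_apply,
    restrictScalars_self, coe_comp, Function.comp_apply, lTensor_tmul, rTensor_tmul,
    LinearEquiv.coe_coe, TensorProduct.assoc_tmul]
  induction Δ c with
  | zero => simp
  | tmul a b => simp
  | add a b ha hb => simp only [add_tmul, map_add, ha, hb]

theorem deltaStep_comp_shiftStep (Δ : C →ₗ[k] C ⊗[k] C) {D : X →ₗ[k] C ⊗[k] X}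
    {r : X ⊗[k] C →ₗ[k] C ⊗[k] X} {s : ℤ}
    (h : deltaStep Δ D ∘ₗ r = shiftStep r ∘ₗ LinearMap.rTensor C D
      - s • (shiftStep r ∘ₗ LinearMap.rTensor C r ∘ₗ
          (TensorProduct.assoc k X C C).symm.toLinearMap ∘ₗ LinearMap.lTensor X Δ)) :
    deltaStep Δ (deltaStep Δ D) ∘ₗ shiftStep r
      = shiftStep (shiftStep r) ∘ₗ LinearMap.rTensor C (deltaStep Δ D)
        - (-s) • (shiftStep (shiftStep r) ∘ₗ LinearMap.rTensor C (shiftStep r) ∘ₗ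
          (TensorProduct.assoc k (C ⊗[k] X) C C).symm.toLinearMap ∘ₗ
            LinearMap.lTensor (C ⊗[k] X) Δ) := by
  have hstep : deltaStep Δ (deltaStep Δ D)
      = headDelta Δ (C ⊗[k] X) - LinearMap.lTensor C (deltaStep Δ D) := rfl
  have hr : LinearMap.rTensor C (deltaStep Δ D)
      = LinearMap.rTensor C (headDelta Δ X) - LinearMap.rTensor C (LinearMap.lTensor C D) :=
    LinearMap.rTensor_sub ..
  have h' : LinearMap.lTensor C (deltaStep Δ D) ∘ₗ shiftStep r
      = shiftStep (shiftStep r) ∘ₗ LinearMap.rTensor C (LinearMap.lTensor C D)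
      - s • (shiftStep (shiftStep r) ∘ₗ LinearMap.rTensor C (shiftStep r) ∘ₗ
          (TensorProduct.assoc k (C ⊗[k] X) C C).symm.toLinearMap ∘ₗ
            LinearMap.lTensor (C ⊗[k] X) Δ) := by
    rw [shiftStep, ← LinearMap.comp_assoc, ← LinearMap.lTensor_comp, h]
    ext c x y
    simp only [AlgebraTensorModule.curry_apply, curry_apply, restrictScalars_self, coe_comp,
      Function.comp_apply, LinearMap.sub_apply, LinearMap.smul_apply, LinearEquiv.coe_coe,
      lTensor_tmul, rTensor_tmul, TensorProduct.assoc_tmul, tmul_sub, shiftStep, tmul_smul]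
    congr 2
    induction Δ y with
    | zero => simp
    | tmul a b => simp
    | add a b ha hb => simp only [tmul_add, map_add, ha, hb]
  rw [hstep, LinearMap.sub_comp, hr, LinearMap.comp_sub, shiftStep_comp_headDelta, h', neg_smul]
  abel

theorem coboundary_coboundary {Δ : C →ₗ[k] C ⊗[k] C}
    {ρl : M →ₗ[k] C ⊗[k] M} {ρr : M →ₗ[k] M ⊗[k] C}
    (hl : (TensorProduct.assoc k C C M).toLinearMap ∘ₗ LinearMap.rTensor M Δ ∘ₗ ρl
      = LinearMap.lTensor C ρl ∘ₗ ρl)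
    (hr : (TensorProduct.assoc k M C C).toLinearMap ∘ₗ LinearMap.rTensor C ρr ∘ₗ ρr
      = LinearMap.lTensor M Δ ∘ₗ ρr)
    (hlr : LinearMap.lTensor C ρr ∘ₗ ρl
      = (TensorProduct.assoc k C M C).toLinearMap ∘ₗ LinearMap.rTensor C ρl ∘ₗ ρr)
    {D : X →ₗ[k] C ⊗[k] X} {r : X ⊗[k] C →ₗ[k] C ⊗[k] X} {s : ℤ} (hs : s * s = 1)
    (hD : deltaStep Δ D ∘ₗ D = 0)
    (h : deltaStep Δ D ∘ₗ r = shiftStep r ∘ₗ LinearMap.rTensor C D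
      - s • (shiftStep r ∘ₗ LinearMap.rTensor C r ∘ₗ
          (TensorProduct.assoc k X C C).symm.toLinearMap ∘ₗ LinearMap.lTensor X Δ))
    (f : M →ₗ[k] X) :
    coboundary ρl ρr (deltaStep Δ D) (shiftStep r) (-s) (coboundary ρl ρr D r s f) = 0 := by
  have hLL : LinearMap.lTensor C (LinearMap.lTensor C f ∘ₗ ρl) ∘ₗ ρl
      = headDelta Δ X ∘ₗ LinearMap.lTensor C f ∘ₗ ρl := by
    rw [← LinearMap.comp_assoc ρl, headDelta_comp_lTensor, LinearMap.lTensor_comp,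
      LinearMap.comp_assoc, ← hl]
    rfl
  have hDL : deltaStep Δ D ∘ₗ LinearMap.lTensor C f ∘ₗ ρl
      = LinearMap.lTensor C (LinearMap.lTensor C f ∘ₗ ρl) ∘ₗ ρl
        - LinearMap.lTensor C (D ∘ₗ f) ∘ₗ ρl := by
    rw [hLL, LinearMap.lTensor_comp]
    rfl
  have hLR : LinearMap.lTensor C (r ∘ₗ LinearMap.rTensor C f ∘ₗ ρr) ∘ₗ ρl
      = shiftStep r ∘ₗ LinearMap.rTensor C (LinearMap.lTensor C f ∘ₗ ρl) ∘ₗ ρr := by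
    have nat : LinearMap.lTensor C (LinearMap.rTensor C f) ∘ₗ
        (TensorProduct.assoc k C M C).toLinearMap = (TensorProduct.assoc k C X C).toLinearMap ∘ₗ
          LinearMap.rTensor C (LinearMap.lTensor C f) := by
      ext; simp
    have nat' := congrArg (fun g => LinearMap.lTensor C r ∘ₗ g ∘ₗ LinearMap.rTensor C ρl ∘ₗ ρr) nat
    rw [LinearMap.lTensor_comp, LinearMap.lTensor_comp, LinearMap.rTensor_comp,
      LinearMap.comp_assoc, LinearMap.comp_assoc, hlr]
    exact nat'
  have hRR : shiftStep r ∘ₗ LinearMap.rTensor C (r ∘ₗ LinearMap.rTensor C f ∘ₗ ρr) ∘ₗ ρr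
      = (shiftStep r ∘ₗ LinearMap.rTensor C r ∘ₗ
          (TensorProduct.assoc k X C C).symm.toLinearMap ∘ₗ LinearMap.lTensor X Δ) ∘ₗ
            LinearMap.rTensor C f ∘ₗ ρr := by
    have nat : (TensorProduct.assoc k X C C).symm.toLinearMap ∘ₗ LinearMap.lTensor X Δ ∘ₗ
        LinearMap.rTensor C f = LinearMap.rTensor C (LinearMap.rTensor C f) ∘ₗ
          (TensorProduct.assoc k M C C).symm.toLinearMap ∘ₗ LinearMap.lTensor M Δ := by
      ext m y
      simp only [AlgebraTensorModule.curry_apply, curry_apply, restrictScalars_self, coe_comp,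
        Function.comp_apply, LinearEquiv.coe_coe, lTensor_tmul, rTensor_tmul]
      induction Δ y with
      | zero => simp
      | tmul a b => simp
      | add a b ha hb => simp only [tmul_add, map_add, ha, hb]
    have hr' : LinearMap.rTensor C ρr ∘ₗ ρr
        = (TensorProduct.assoc k M C C).symm.toLinearMap ∘ₗ LinearMap.lTensor M Δ ∘ₗ ρr := by
      rw [← hr]
      ext m
      simp
    have nat' := congrArg
      (fun g => shiftStep r ∘ₗ LinearMap.rTensor C r ∘ₗ g ∘ₗ ρr) nat
    rw [LinearMap.rTensor_comp, LinearMap.rTensor_comp, LinearMap.comp_assoc,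
      LinearMap.comp_assoc, hr']
    exact nat'.symm
  have hDR : deltaStep Δ D ∘ₗ r ∘ₗ LinearMap.rTensor C f ∘ₗ ρr
      = shiftStep r ∘ₗ LinearMap.rTensor C (D ∘ₗ f) ∘ₗ ρr
        - s • (shiftStep r ∘ₗ LinearMap.rTensor C (r ∘ₗ LinearMap.rTensor C f ∘ₗ ρr) ∘ₗ ρr) := by
    rw [← LinearMap.comp_assoc, h, hRR, LinearMap.sub_comp, LinearMap.rTensor_comp]
    rfl
  have hDD : deltaStep Δ D ∘ₗ D ∘ₗ f = 0 := by
    rw [← LinearMap.comp_assoc, hD, LinearMap.zero_comp]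
  have lsmul (g : M →ₗ[k] C ⊗[k] X) :
      LinearMap.lTensor C (s • g) = s • LinearMap.lTensor C g :=
    map_zsmul (LinearMap.lTensorHom (R := k) C) s g
  have rsmul (g : M →ₗ[k] C ⊗[k] X) :
      LinearMap.rTensor C (s • g) = s • LinearMap.rTensor C g :=
    map_zsmul (LinearMap.rTensorHom (R := k) C) s g
  have csmul {A B E : Type} [AddCommGroup A] [Module k A] [AddCommGroup B] [Module k B]
      [AddCommGroup E] [Module k E] (a : B →ₗ[k] E) (b : A →ₗ[k] B) :
      a ∘ₗ (s • b) = s • (a ∘ₗ b) := by ext; simp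
  have smulc {A B E : Type} [AddCommGroup A] [Module k A] [AddCommGroup B] [Module k B]
      [AddCommGroup E] [Module k E] (a : B →ₗ[k] E) (b : A →ₗ[k] B) :
      (s • a) ∘ₗ b = s • (a ∘ₗ b) := by ext; simp
  unfold coboundary
  simp only [LinearMap.lTensor_add, LinearMap.lTensor_sub, LinearMap.rTensor_add,
    LinearMap.rTensor_sub, lsmul, rsmul, LinearMap.comp_add, LinearMap.comp_sub,
    LinearMap.add_comp, LinearMap.sub_comp, csmul, smulc, hDL, hDR, hDD, hLR, smul_sub,
    smul_add, smul_smul, neg_smul, neg_mul, hs, one_smul]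
  abel

theorem psiStep_comp_shift {ψ : C →ₗ[k] C} {P : X →ₗ[k] X} {r : X ⊗[k] C →ₗ[k] C ⊗[k] X}
    (h : psiStep ψ P ∘ₗ r = r ∘ₗ (LinearMap.rTensor C P + LinearMap.lTensor X ψ)) :
    psiStep ψ (psiStep ψ P) ∘ₗ shiftStep r
      = shiftStep r ∘ₗ (LinearMap.rTensor C (psiStep ψ P) + LinearMap.lTensor (C ⊗[k] X) ψ) := by
  ext c x y
  have h' := LinearMap.congr_fun h (x ⊗ₜ y)
  simp only [coe_comp, Function.comp_apply, LinearMap.add_apply, lTensor_tmul, rTensor_tmul,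
    map_add] at h'
  have hstep : psiStep ψ (psiStep ψ P)
      = LinearMap.rTensor (C ⊗[k] X) ψ + LinearMap.lTensor C (psiStep ψ P) := rfl
  have htmul : psiStep ψ P (c ⊗ₜ x) = ψ c ⊗ₜ x + c ⊗ₜ P x := rfl
  rw [hstep]
  simp only [shiftStep, AlgebraTensorModule.curry_apply, curry_apply, restrictScalars_self,
    coe_comp, Function.comp_apply, LinearMap.add_apply, lTensor_tmul, rTensor_tmul,
    LinearEquiv.coe_coe, TensorProduct.assoc_tmul, h', map_add, tmul_add, add_tmul,
    htmul, add_assoc]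

theorem headDelta_comp_rTensor {Δ : C →ₗ[k] C ⊗[k] C} {ψ : C →ₗ[k] C}
    (hψ : Δ ∘ₗ ψ = LinearMap.rTensor C ψ ∘ₗ Δ + LinearMap.lTensor C ψ ∘ₗ Δ) :
    headDelta Δ X ∘ₗ LinearMap.rTensor X ψ
      = (LinearMap.rTensor (C ⊗[k] X) ψ + LinearMap.lTensor C (LinearMap.rTensor X ψ)) ∘ₗ
        headDelta Δ X := by
  ext c x
  have h := LinearMap.congr_fun hψ c
  simp only [coe_comp, Function.comp_apply, LinearMap.add_apply] at h
  simp only [headDelta, AlgebraTensorModule.curry_apply, curry_apply, restrictScalars_self,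
    coe_comp, Function.comp_apply, LinearMap.add_apply, rTensor_tmul, LinearEquiv.coe_coe, h]
  induction Δ c with
  | zero => simp
  | tmul a b => simp [add_tmul]
  | add a b ha hb =>
    simp only [add_tmul, map_add] at ha hb ⊢
    rw [add_add_add_comm, ha, hb]
    abel

theorem deltaStep_comp_psiStep {Δ : C →ₗ[k] C ⊗[k] C} {ψ : C →ₗ[k] C}
    (hψ : Δ ∘ₗ ψ = LinearMap.rTensor C ψ ∘ₗ Δ + LinearMap.lTensor C ψ ∘ₗ Δ)
    {D : X →ₗ[k] C ⊗[k] X} {P : X →ₗ[k] X} (h : D ∘ₗ P = psiStep ψ P ∘ₗ D) :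
    deltaStep Δ D ∘ₗ psiStep ψ P = psiStep ψ (psiStep ψ P) ∘ₗ deltaStep Δ D := by
  have h1 := headDelta_comp_rTensor (X := X) hψ
  have h2 := headDelta_comp_lTensor Δ P
  have h3 : LinearMap.lTensor C D ∘ₗ LinearMap.lTensor C P
      = LinearMap.lTensor C (psiStep ψ P) ∘ₗ LinearMap.lTensor C D := by
    rw [← LinearMap.lTensor_comp, h, LinearMap.lTensor_comp]
  have h4 : LinearMap.lTensor C D ∘ₗ LinearMap.rTensor X ψ
      = LinearMap.rTensor (C ⊗[k] X) ψ ∘ₗ LinearMap.lTensor C D := by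
    ext; simp
  have h5 : LinearMap.lTensor C (psiStep ψ P) = LinearMap.lTensor C (LinearMap.rTensor X ψ)
      + LinearMap.lTensor C (LinearMap.lTensor C P) := LinearMap.lTensor_add ..
  have h6 : deltaStep Δ D ∘ₗ psiStep ψ P
      = headDelta Δ X ∘ₗ LinearMap.rTensor X ψ + headDelta Δ X ∘ₗ LinearMap.lTensor C P
        - (LinearMap.lTensor C D ∘ₗ LinearMap.rTensor X ψ
          + LinearMap.lTensor C D ∘ₗ LinearMap.lTensor C P) := by
    rw [psiStep, deltaStep, LinearMap.sub_comp, LinearMap.comp_add, LinearMap.comp_add]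
  have h7 : psiStep ψ (psiStep ψ P)
      = LinearMap.rTensor (C ⊗[k] X) ψ + LinearMap.lTensor C (psiStep ψ P) := rfl
  rw [h6, h1, h2, h3, h4, h7, deltaStep]
  simp only [h5, LinearMap.add_comp, LinearMap.comp_sub]
  abel

theorem coboundary_comp_psi {ψ : C →ₗ[k] C} {ψM : M →ₗ[k] M}
    {ρl : M →ₗ[k] C ⊗[k] M} {ρr : M →ₗ[k] M ⊗[k] C}
    (hψl : ρl ∘ₗ ψM = LinearMap.lTensor C ψM ∘ₗ ρl + LinearMap.rTensor M ψ ∘ₗ ρl)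
    (hψr : ρr ∘ₗ ψM = LinearMap.rTensor C ψM ∘ₗ ρr + LinearMap.lTensor M ψ ∘ₗ ρr)
    {D : X →ₗ[k] C ⊗[k] X} {r : X ⊗[k] C →ₗ[k] C ⊗[k] X} {P : X →ₗ[k] X} (s : ℤ)
    (hD : D ∘ₗ P = psiStep ψ P ∘ₗ D)
    (h : psiStep ψ P ∘ₗ r = r ∘ₗ (LinearMap.rTensor C P + LinearMap.lTensor X ψ))
    (f : M →ₗ[k] X) :
    coboundary ρl ρr D r s (P ∘ₗ f - f ∘ₗ ψM)
      = psiStep ψ P ∘ₗ coboundary ρl ρr D r s f - coboundary ρl ρr D r s f ∘ₗ ψM := by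
  have hl1 : LinearMap.rTensor X ψ ∘ₗ LinearMap.lTensor C f
      = LinearMap.lTensor C f ∘ₗ LinearMap.rTensor M ψ := by
    ext; simp
  have hr1 : LinearMap.lTensor X ψ ∘ₗ LinearMap.rTensor C f
      = LinearMap.rTensor C f ∘ₗ LinearMap.lTensor M ψ := by
    ext; simp
  ext m
  have el (t) := LinearMap.congr_fun hl1 t
  have er (t) := LinearMap.congr_fun hr1 t
  have eψl := LinearMap.congr_fun hψl m
  have eψr := LinearMap.congr_fun hψr m
  have eD := LinearMap.congr_fun hD (f m)
  have eh (t) := LinearMap.congr_fun h t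
  have ep (t) : psiStep ψ P t = LinearMap.rTensor X ψ t + LinearMap.lTensor C P t := rfl
  simp only [coe_comp, Function.comp_apply, LinearMap.add_apply, map_add] at el er eψl eψr eD eh
  simp only [coboundary, coe_comp, Function.comp_apply, LinearMap.add_apply, LinearMap.sub_apply,
    LinearMap.smul_apply, LinearMap.lTensor_sub, LinearMap.rTensor_sub, LinearMap.lTensor_comp,
    LinearMap.rTensor_comp, map_add, map_sub, map_zsmul, eψl, eψr, eD, eh, er]
  simp only [ep (LinearMap.lTensor C f (ρl m)), el, smul_add, smul_sub]
  abel

theorem coboundary_add (ρl : M →ₗ[k] C ⊗[k] M) (ρr : M →ₗ[k] M ⊗[k] C)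
    (D : X →ₗ[k] C ⊗[k] X) (r : X ⊗[k] C →ₗ[k] C ⊗[k] X) (s : ℤ) (f g : M →ₗ[k] X) :
    coboundary ρl ρr D r s (f + g) = coboundary ρl ρr D r s f + coboundary ρl ρr D r s g := by
  simp only [coboundary, LinearMap.lTensor_add, LinearMap.rTensor_add, LinearMap.comp_add,
    LinearMap.add_comp, smul_add]
  abel

theorem lTensor_sum_zsmul {ι : Type} (t : Finset ι) (a : ι → ℤ) (g : ι → (X →ₗ[k] Y)) :
    LinearMap.lTensor C (∑ j ∈ t, a j • g j) = ∑ j ∈ t, a j • LinearMap.lTensor C (g j) := by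
  change LinearMap.lTensorHom (R := k) C _ = _
  rw [map_sum]
  exact Finset.sum_congr rfl fun j _ => map_zsmul _ _ _

theorem sum_comp {ι : Type} (t : Finset ι) (g : ι → (X →ₗ[k] Y)) (f : M →ₗ[k] X) :
    (∑ j ∈ t, g j) ∘ₗ f = ∑ j ∈ t, g j ∘ₗ f := by
  ext m
  simp [LinearMap.sum_apply]

theorem alternating_sum_comp {n : ℕ} (g : Fin n → (X →ₗ[k] Y)) (f : M →ₗ[k] X) :
    ∑ j, ((-1 : ℤ) ^ (j.val + 1)) • (g j ∘ₗ f) = - ((∑ j, ((-1 : ℤ) ^ j.val) • g j) ∘ₗ f) := by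
  rw [sum_comp, ← Finset.sum_neg_distrib]
  refine Finset.sum_congr rfl fun j _ => ?_
  rw [pow_succ, mul_neg_one, neg_smul]
  congr 1

end Plain

/-- The alternating sum of comultiplications `C^{⊗(n+1)} → C^{⊗(n+2)}`. -/
noncomputable def innerDelta (C : ModuleCat.{0} k) (Δ : C →ₗ[k] C ⊗[k] C) :
    (n : ℕ) → (Tpow k C n →ₗ[k] C ⊗[k] Tpow k C n)
  | 0 => Δ
  | n + 1 => deltaStep Δ (innerDelta C Δ n)

/-- The extension of `ψ` to `C^{⊗(n+1)}` as a sum over the factors. -/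
noncomputable def totalPsi (C : ModuleCat.{0} k) (ψ : C →ₗ[k] C) :
    (n : ℕ) → (Tpow k C n →ₗ[k] Tpow k C n)
  | 0 => ψ
  | n + 1 => psiStep ψ (totalPsi C ψ n)

variable (C : ModuleCat.{0} k)

theorem innerDelta_eq_sum (Δ : C →ₗ[k] C ⊗[k] C) (n : ℕ) :
    (innerDelta C Δ n : Tpow k C n →ₗ[k] Tpow k C (n + 1))
      = ∑ j : Fin (n + 1), ((-1 : ℤ) ^ j.val) • insDelta k C Δ n j := by
  induction n with
  | zero =>
    rw [Fin.sum_univ_one, Fin.val_zero, pow_zero, one_smul]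
    rfl
  | succ n ih =>
    have hsum : LinearMap.lTensor C (innerDelta C Δ n)
        = ∑ j : Fin (n + 1), ((-1 : ℤ) ^ j.val) • LinearMap.lTensor C (insDelta k C Δ n j) := by
      exact (congrArg (LinearMap.lTensor (R := k) C) ih).trans (lTensor_sum_zsmul _ _ _)
    rw [Fin.sum_univ_succ, Fin.val_zero, pow_zero, one_smul]
    have hneg : ∑ j : Fin (n + 1), ((-1 : ℤ) ^ j.succ.val) • insDelta k C Δ (n + 1) j.succ
        = - ∑ j : Fin (n + 1), ((-1 : ℤ) ^ j.val) • insDelta k C Δ (n + 1) j.succ := by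
      rw [← Finset.sum_neg_distrib]
      refine Finset.sum_congr rfl fun j _ => ?_
      rw [Fin.val_succ, pow_succ, mul_neg_one, neg_smul]
    rw [hneg, ← sub_eq_add_neg]
    exact congrArg (headDelta Δ (Tpow k C n) - ·) hsum

theorem totalPsi_eq_sum (ψ : C →ₗ[k] C) (n : ℕ) :
    totalPsi C ψ n = ∑ j : Fin (n + 1), psiAt k C ψ n j := by
  induction n with
  | zero =>
    rw [Fin.sum_univ_one]
    rfl
  | succ n ih =>
    have hsum : LinearMap.lTensor C (totalPsi C ψ n)
        = ∑ j : Fin (n + 1), LinearMap.lTensor C (psiAt k C ψ n j) := by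
      refine (congrArg (LinearMap.lTensorHom (R := k) C) ih).trans ?_
      rw [map_sum]
      rfl
    rw [Fin.sum_univ_succ]
    exact congrArg (LinearMap.rTensor (Tpow k C n) ψ + ·) hsum

variable (M : ModuleCat.{0} k)

theorem deltaC_eq_coboundary (Δ : C →ₗ[k] C ⊗[k] C)
    (ρl : M →ₗ[k] C ⊗[k] M) (ρr : M →ₗ[k] M ⊗[k] C) (n : ℕ) (f : M →ₗ[k] Tpow k C n) :
    deltaC C Δ M ρl ρr n f
      = coboundary ρl ρr (innerDelta C Δ n) (rshift k C n) ((-1) ^ n) f := by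
  have hsum : ∑ j : Fin (n + 1), ((-1 : ℤ) ^ (j.val + 1)) • (insDelta k C Δ n j ∘ₗ f)
      = - ((innerDelta C Δ n : Tpow k C n →ₗ[k] Tpow k C (n + 1)) ∘ₗ f) := by
    have h := alternating_sum_comp (insDelta k C Δ n) f
    rw [← innerDelta_eq_sum] at h
    exact h
  rw [deltaC, hsum, pow_add, neg_one_sq, mul_one]
  exact congrArg (· + _) (sub_eq_add_neg _ _).symm

theorem omegaC_eq (ψC : C →ₗ[k] C) (ψM : M →ₗ[k] M) (n : ℕ) (f : M →ₗ[k] Tpow k C n) :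
    omegaC C ψC M ψM n f = totalPsi C ψC n ∘ₗ f - f ∘ₗ ψM := by
  rw [omegaC, totalPsi_eq_sum, sum_comp]

theorem deltaStep_innerDelta_comp_innerDelta {Δ : C →ₗ[k] C ⊗[k] C}
    (hΔ : (TensorProduct.assoc k C C C).toLinearMap ∘ₗ LinearMap.rTensor C Δ ∘ₗ Δ
      = LinearMap.lTensor C Δ ∘ₗ Δ) (n : ℕ) :
    deltaStep Δ (innerDelta C Δ n) ∘ₗ innerDelta C Δ n = 0 := by
  induction n with
  | zero => exact deltaStep_comp_self hΔ
  | succ n ih => exact deltaStep_comp_deltaStep hΔ ih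

theorem deltaStep_innerDelta_comp_rshift (Δ : C →ₗ[k] C ⊗[k] C) (n : ℕ) :
    deltaStep Δ (innerDelta C Δ n) ∘ₗ rshift k C n
      = shiftStep (rshift k C n) ∘ₗ LinearMap.rTensor C (innerDelta C Δ n)
        - ((-1 : ℤ) ^ n) • (shiftStep (rshift k C n) ∘ₗ LinearMap.rTensor C (rshift k C n) ∘ₗ
          (TensorProduct.assoc k (Tpow k C n) C C).symm.toLinearMap ∘ₗ
            LinearMap.lTensor (Tpow k C n) Δ) := by
  induction n with
  | zero => exact deltaStep_comp_id Δ
  | succ n ih =>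
    rw [pow_succ, mul_neg_one]
    exact deltaStep_comp_shiftStep Δ ih

theorem innerDelta_comp_totalPsi {Δ : C →ₗ[k] C ⊗[k] C} {ψ : C →ₗ[k] C}
    (hψ : Δ ∘ₗ ψ = LinearMap.rTensor C ψ ∘ₗ Δ + LinearMap.lTensor C ψ ∘ₗ Δ) (n : ℕ) :
    innerDelta C Δ n ∘ₗ totalPsi C ψ n = psiStep ψ (totalPsi C ψ n) ∘ₗ innerDelta C Δ n := by
  induction n with
  | zero => exact hψ
  | succ n ih => exact deltaStep_comp_psiStep hψ ih

theorem psiStep_totalPsi_comp_rshift (ψ : C →ₗ[k] C) (n : ℕ) :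
    psiStep ψ (totalPsi C ψ n) ∘ₗ rshift k C n
      = rshift k C n ∘ₗ
        (LinearMap.rTensor C (totalPsi C ψ n) + LinearMap.lTensor (Tpow k C n) ψ) := by
  induction n with
  | zero => rfl
  | succ n ih => exact psiStep_comp_shift ih

variable {M}

theorem deltaC_deltaC {Δ : C →ₗ[k] C ⊗[k] C}
    (hΔ : (TensorProduct.assoc k C C C).toLinearMap ∘ₗ LinearMap.rTensor C Δ ∘ₗ Δ
      = LinearMap.lTensor C Δ ∘ₗ Δ)
    {ρl : M →ₗ[k] C ⊗[k] M} {ρr : M →ₗ[k] M ⊗[k] C}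
    (hl : (TensorProduct.assoc k C C M).toLinearMap ∘ₗ LinearMap.rTensor M Δ ∘ₗ ρl
      = LinearMap.lTensor C ρl ∘ₗ ρl)
    (hr : (TensorProduct.assoc k M C C).toLinearMap ∘ₗ LinearMap.rTensor C ρr ∘ₗ ρr
      = LinearMap.lTensor M Δ ∘ₗ ρr)
    (hlr : LinearMap.lTensor C ρr ∘ₗ ρl
      = (TensorProduct.assoc k C M C).toLinearMap ∘ₗ LinearMap.rTensor C ρl ∘ₗ ρr)
    (n : ℕ) (f : M →ₗ[k] Tpow k C n) :
    deltaC C Δ M ρl ρr (n + 1) (deltaC C Δ M ρl ρr n f) = 0 := by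
  rw [deltaC_eq_coboundary, deltaC_eq_coboundary, pow_succ, mul_neg_one]
  have hs : (-1 : ℤ) ^ n * (-1) ^ n = 1 := by rw [← mul_pow]; simp
  exact coboundary_coboundary hl hr hlr hs (deltaStep_innerDelta_comp_innerDelta C hΔ n)
    (deltaStep_innerDelta_comp_rshift C Δ n) f

theorem deltaC_omegaC {Δ : C →ₗ[k] C ⊗[k] C} {ψC : C →ₗ[k] C}
    (hψC : Δ ∘ₗ ψC = LinearMap.rTensor C ψC ∘ₗ Δ + LinearMap.lTensor C ψC ∘ₗ Δ)
    {ρl : M →ₗ[k] C ⊗[k] M} {ρr : M →ₗ[k] M ⊗[k] C} {ψM : M →ₗ[k] M}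
    (hψl : ρl ∘ₗ ψM = LinearMap.lTensor C ψM ∘ₗ ρl + LinearMap.rTensor M ψC ∘ₗ ρl)
    (hψr : ρr ∘ₗ ψM = LinearMap.rTensor C ψM ∘ₗ ρr + LinearMap.lTensor M ψC ∘ₗ ρr)
    (n : ℕ) (f : M →ₗ[k] Tpow k C n) :
    deltaC C Δ M ρl ρr n (omegaC C ψC M ψM n f)
      = omegaC C ψC M ψM (n + 1) (deltaC C Δ M ρl ρr n f) := by
  rw [omegaC_eq, omegaC_eq, deltaC_eq_coboundary, deltaC_eq_coboundary]
  exact coboundary_comp_psi hψl hψr _ (innerDelta_comp_totalPsi C hψC n)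
    (psiStep_totalPsi_comp_rshift C ψC n) f

theorem deltaC_add (Δ : C →ₗ[k] C ⊗[k] C) (ρl : M →ₗ[k] C ⊗[k] M) (ρr : M →ₗ[k] M ⊗[k] C)
    (n : ℕ) (f g : M →ₗ[k] Tpow k C n) :
    deltaC C Δ M ρl ρr n (f + g) = deltaC C Δ M ρl ρr n f + deltaC C Δ M ρl ρr n g := by
  rw [deltaC_eq_coboundary, deltaC_eq_coboundary, deltaC_eq_coboundary]
  exact coboundary_add _ _ _ _ _ f g

theorem deltaC_zsmul (Δ : C →ₗ[k] C ⊗[k] C) (ρl : M →ₗ[k] C ⊗[k] M) (ρr : M →ₗ[k] M ⊗[k] C)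
    (n : ℕ) (s : ℤ) (f : M →ₗ[k] Tpow k C n) :
    deltaC C Δ M ρl ρr n (s • f) = s • deltaC C Δ M ρl ρr n f :=
  map_zsmul (AddMonoidHom.mk' (deltaC C Δ M ρl ρr n) (deltaC_add C Δ ρl ρr n)) s f

end CoderPair

/-- For a Coder pair `(C, ψ_C)` and a bicomodule `(M, ρ_l, ρ_r, ψ_M)` over it, the
Coder-pair coboundary maps satisfy `d_c^{n+1} ∘ d_c^n = 0` for all `n ≥ 1`.
The first conjunct is the case `n = 1` (where `C_Coder^1(M,C) = Hom(M,C)` and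
`d_c^1(f) = (δ_c f, −ω f)`); the second conjunct covers all `n ≥ 2`, where an
element of `C_Coder^n(M,C) = C_c^n(M,C) × C_c^{n-1}(M,C)` is a pair `(f, g)` with
`f : M →ₗ Tpow k C (n'+1)` and `g : M →ₗ Tpow k C n'` for `n = n' + 2`:
`δ_c(δ_c(f)) = 0` and `δ_c(δ_c(g) + (−1)^n ω(f)) + (−1)^{n+1} ω(δ_c(f)) = 0`. -/
theorem dC_squared_eq_zero [CharZero k]
    (C : ModuleCat.{0} k) (Δ : C →ₗ[k] C ⊗[k] C)
    (hΔ : (TensorProduct.assoc k C C C).toLinearMap ∘ₗ LinearMap.rTensor C Δ ∘ₗ Δ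
        = LinearMap.lTensor C Δ ∘ₗ Δ)
    (ψC : C →ₗ[k] C)
    (hψC : Δ ∘ₗ ψC = LinearMap.rTensor C ψC ∘ₗ Δ + LinearMap.lTensor C ψC ∘ₗ Δ)
    (M : ModuleCat.{0} k)
    (ρl : M →ₗ[k] C ⊗[k] M) (ρr : M →ₗ[k] M ⊗[k] C) (ψM : M →ₗ[k] M)
    (hl : (TensorProduct.assoc k C C M).toLinearMap ∘ₗ LinearMap.rTensor M Δ ∘ₗ ρl
        = LinearMap.lTensor C ρl ∘ₗ ρl)
    (hr : (TensorProduct.assoc k M C C).toLinearMap ∘ₗ LinearMap.rTensor C ρr ∘ₗ ρr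
        = LinearMap.lTensor M Δ ∘ₗ ρr)
    (hlr : LinearMap.lTensor C ρr ∘ₗ ρl
        = (TensorProduct.assoc k C M C).toLinearMap ∘ₗ LinearMap.rTensor C ρl ∘ₗ ρr)
    (hψl : ρl ∘ₗ ψM = LinearMap.lTensor C ψM ∘ₗ ρl + LinearMap.rTensor M ψC ∘ₗ ρl)
    (hψr : ρr ∘ₗ ψM = LinearMap.rTensor C ψM ∘ₗ ρr + LinearMap.lTensor M ψC ∘ₗ ρr) :
    (∀ f : M →ₗ[k] Tpow k C 0,
      deltaC C Δ M ρl ρr 1 (deltaC C Δ M ρl ρr 0 f) = 0 ∧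
      deltaC C Δ M ρl ρr 0 (((-1 : ℤ) ^ 1) • omegaC C ψC M ψM 0 f)
        + ((-1 : ℤ) ^ 2) • omegaC C ψC M ψM 1 (deltaC C Δ M ρl ρr 0 f) = 0) ∧
    (∀ (n : ℕ) (f : M →ₗ[k] Tpow k C (n + 1)) (g : M →ₗ[k] Tpow k C n),
      deltaC C Δ M ρl ρr (n + 2) (deltaC C Δ M ρl ρr (n + 1) f) = 0 ∧
      deltaC C Δ M ρl ρr (n + 1)
          (deltaC C Δ M ρl ρr n g + ((-1 : ℤ) ^ (n + 2)) • omegaC C ψC M ψM (n + 1) f)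
        + ((-1 : ℤ) ^ (n + 3)) • omegaC C ψC M ψM (n + 2) (deltaC C Δ M ρl ρr (n + 1) f)
        = 0) := by
  have hδδ (n : ℕ) (f : M →ₗ[k] Tpow k C n) :=
    CoderPair.deltaC_deltaC C hΔ hl hr hlr n f
  have hδω (n : ℕ) (f : M →ₗ[k] Tpow k C n) :=
    CoderPair.deltaC_omegaC C hψC hψl hψr n f
  refine ⟨fun f => ⟨hδδ 0 f, ?_⟩, fun n f g => ⟨hδδ (n + 1) f, ?_⟩⟩
  · rw [CoderPair.deltaC_zsmul, hδω, pow_succ _ 1, mul_neg_one, neg_smul, add_neg_cancel]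
  · rw [CoderPair.deltaC_add, hδδ, CoderPair.deltaC_zsmul, hδω, pow_succ _ (n + 2), mul_neg_one,
      neg_smul, zero_add, add_neg_cancel]
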